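/- Let p > 0, b > 0, θ ∈ ℝ, ρ ∈ (−1, 1). Let W have the Gamma distribution of shape p and rate b²/2, independent of (Z₁, Z₂) having the bivariate standard normal density with correlation ρ, and set X_i = θW + √W·Z_i, i = 1, 2, with common marginal distribution function F. Then the coefficient of lower tail dependence vanishes: lim_{u→0⁺} P(X₁ ≤ F^{−1}(u) | X₂ ≤ F^{−1}(u)) = 0; i.e., λ_L(u) = P(X₁ ≤ F^{−1}(u), X₂ ≤ F^{−1}(u))/u → 0 as u → 0⁺. -/

import Mathlib

open MeasureTheory Real Set Filter

lemma aux_mgf (ρ a : ℝ) (hρ : ρ ∈ Set.Ioo (-1 : ℝ) 1)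
    (μ : Measure (ℝ × ℝ)) [IsProbabilityMeasure μ]
    (hμ : μ = volume.withDensity fun z : ℝ × ℝ => ENNReal.ofReal
        ((2 * Real.pi * Real.sqrt (1 - ρ ^ 2))⁻¹ *
          Real.exp (-(z.1 ^ 2 - 2 * ρ * z.1 * z.2 + z.2 ^ 2) / (2 * (1 - ρ ^ 2))))) :
    ∫⁻ z, ENNReal.ofReal (Real.exp (a * (z.1 + z.2))) ∂μ
      = ENNReal.ofReal (Real.exp (a ^ 2 * (1 + ρ))) := by
  obtain ⟨h1, h2⟩ := hρ
  have hone : μ univ = 1 := measure_univ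
  rw [hμ] at hone ⊢
  rw [withDensity_apply _ MeasurableSet.univ, Measure.restrict_univ] at hone
  rw [lintegral_withDensity_eq_lintegral_mul _ (by fun_prop) (by fun_prop)]
  set f : ℝ × ℝ → ENNReal := fun z => ENNReal.ofReal
        ((2 * Real.pi * Real.sqrt (1 - ρ ^ 2))⁻¹ *
          Real.exp (-(z.1 ^ 2 - 2 * ρ * z.1 * z.2 + z.2 ^ 2) / (2 * (1 - ρ ^ 2)))) with hf
  set m : ℝ := a * (1 + ρ) with hm
  have key : ∀ z : ℝ × ℝ, (f * fun z : ℝ × ℝ => ENNReal.ofReal (Real.exp (a * (z.1 + z.2)))) z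
      = ENNReal.ofReal (Real.exp (a ^ 2 * (1 + ρ))) * f (z - (m, m)) := by
    intro z
    have hc : 0 ≤ (2 * Real.pi * Real.sqrt (1 - ρ ^ 2))⁻¹ := by positivity
    simp only [Pi.mul_apply, hf]
    rw [← ENNReal.ofReal_mul (by positivity), ← ENNReal.ofReal_mul (by positivity)]
    congr 1
    rw [mul_assoc, ← Real.exp_add, mul_left_comm, ← Real.exp_add]
    congr 2
    have hne : (1 - ρ ^ 2) ≠ 0 := by nlinarith
    simp only [Prod.fst_sub, Prod.snd_sub, hm]
    field_simp
    ring
  simp_rw [key]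
  rw [lintegral_const_mul _ (by simp only [hf]; fun_prop), lintegral_sub_right_eq_self f, hone, mul_one]

lemma aux_gamma (p b q : ℝ) (hp : 0 < p) (hq : q < b ^ 2 / 2) :
    ∫⁻ w, ENNReal.ofReal (Real.exp (q * w)) ∂(volume.withDensity fun w : ℝ => ENNReal.ofReal
        (if 0 < w then
          (b ^ 2 / 2) ^ p * w ^ (p - 1) * Real.exp (-(b ^ 2 / 2) * w) / Real.Gamma p
        else 0)) < ⊤ := by
  rw [lintegral_withDensity_eq_lintegral_mul _ (by
    refine Measurable.ennreal_ofReal (Measurable.ite measurableSet_Ioi (by fun_prop) (by fun_prop))) (by fun_prop)]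
  have hint : IntegrableOn (fun x : ℝ => x ^ (p - 1) * Real.exp (-(b ^ 2 / 2 - q) * x)) (Ioi 0) := by
    have := integrableOn_rpow_mul_exp_neg_mul_rpow (s := p - 1) (p := 1) (by linarith) one_pos (b := b ^ 2 / 2 - q) (by linarith)
    simpa using this
  have h2 := (hint.integrable.const_mul ((b ^ 2 / 2) ^ p / Real.Gamma p))
  have h3 := h2.lintegral_lt_top
  refine lt_of_le_of_lt ?_ h3
  rw [← lintegral_indicator measurableSet_Ioi]
  refine lintegral_mono fun w => ?_
  simp only [Pi.mul_apply]
  by_cases hw : 0 < w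
  · rw [indicator_of_mem (by exact hw), if_pos hw, ← ENNReal.ofReal_mul' (by positivity)]
    refine le_of_eq ?_
    congr 1
    rw [show -(b ^ 2 / 2 - q) * w = -(b ^ 2 / 2) * w + q * w by ring, Real.exp_add]
    ring
  · rw [if_neg hw]; simp

lemma aux_W (p b δ : ℝ) (hp : 0 < p) (hb : 0 < b) (hδ : 0 < δ) :
    ∃ c : ℝ, 0 < c ∧ ∀ k : ℝ, 1 ≤ k → ENNReal.ofReal (c * Real.exp (-(b ^ 2 / 2 + δ) * k)) ≤
    (volume.withDensity fun w : ℝ => ENNReal.ofReal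
        (if 0 < w then
          (b ^ 2 / 2) ^ p * w ^ (p - 1) * Real.exp (-(b ^ 2 / 2) * w) / Real.Gamma p
        else 0)) (Icc k (k + 1)) := by
  have hG := Real.Gamma_pos_of_pos hp
  refine ⟨(b ^ 2 / 2) ^ p / Real.Gamma p * δ * Real.exp (-(b ^ 2 / 2 + δ)), by positivity, fun k hk => ?_⟩
  rw [withDensity_apply _ measurableSet_Icc]
  have hv : volume (Icc k (k + 1)) = 1 := by simp
  calc _ = ∫⁻ w in Icc k (k + 1), ENNReal.ofReal ((b ^ 2 / 2) ^ p / Real.Gamma p * δ * Real.exp (-(b ^ 2 / 2 + δ)) * Real.exp (-(b ^ 2 / 2 + δ) * k)) := by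
        rw [setLIntegral_const, hv, mul_one]
    _ ≤ _ := by
        refine setLIntegral_mono' measurableSet_Icc fun w hw => ?_
        obtain ⟨hw1, hw2⟩ := hw
        have hw0 : 0 < w := by linarith
        refine ENNReal.ofReal_le_ofReal ?_
        rw [if_pos hw0]
        have e1 : δ * Real.exp (-δ * w) ≤ w ^ (p - 1) := by
          have : w ^ (-1 : ℝ) ≤ w ^ (p - 1) := Real.rpow_le_rpow_of_exponent_le (by linarith) (by linarith)
          refine le_trans ?_ this
          rw [Real.rpow_neg_one, neg_mul, Real.exp_neg, ← div_eq_mul_inv, div_le_iff₀ (Real.exp_pos _), inv_mul_eq_div, le_div_iff₀ hw0]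
          have := Real.add_one_le_exp (δ * w)
          linarith
        have e2 : Real.exp (-(b ^ 2 / 2 + δ)) * Real.exp (-(b ^ 2 / 2 + δ) * k) ≤ Real.exp (-δ * w) * Real.exp (-(b ^ 2 / 2) * w) := by
          rw [← Real.exp_add, ← Real.exp_add]
          apply Real.exp_le_exp.2
          have : 0 < b ^ 2 / 2 + δ := by positivity
          nlinarith
        calc _ = (b ^ 2 / 2) ^ p / Real.Gamma p * δ * (Real.exp (-(b ^ 2 / 2 + δ)) * Real.exp (-(b ^ 2 / 2 + δ) * k)) := by ring
          _ ≤ (b ^ 2 / 2) ^ p / Real.Gamma p * δ * (Real.exp (-δ * w) * Real.exp (-(b ^ 2 / 2) * w)) := by gcongr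
          _ = (b ^ 2 / 2) ^ p / Real.Gamma p * (δ * Real.exp (-δ * w)) * Real.exp (-(b ^ 2 / 2) * w) := by ring
          _ ≤ (b ^ 2 / 2) ^ p / Real.Gamma p * (w ^ (p - 1)) * Real.exp (-(b ^ 2 / 2) * w) := by gcongr
          _ = _ := by ring

lemma aux_Z (ρ : ℝ) (hρ : ρ ∈ Set.Ioo (-1 : ℝ) 1) :
    ∃ c : ℝ, 0 < c ∧ ∀ t : ℝ, 0 ≤ t → ENNReal.ofReal (c * Real.exp (-(t + 1) ^ 2 / 2)) ≤
    (volume.withDensity fun z : ℝ × ℝ => ENNReal.ofReal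
        ((2 * Real.pi * Real.sqrt (1 - ρ ^ 2))⁻¹ *
          Real.exp (-(z.1 ^ 2 - 2 * ρ * z.1 * z.2 + z.2 ^ 2) / (2 * (1 - ρ ^ 2)))))
      (Icc (-t - 1) (-t) ×ˢ Icc (-ρ * t) (-ρ * t + 1)) := by
  obtain ⟨h1, h2⟩ := hρ
  have h3 : 0 < 1 - ρ ^ 2 := by nlinarith
  have h4 := Real.sqrt_pos.2 h3
  have hpi := Real.pi_pos
  refine ⟨(2 * Real.pi * Real.sqrt (1 - ρ ^ 2))⁻¹ * Real.exp (-2 / (1 - ρ ^ 2)), by positivity, fun t ht => ?_⟩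
  have hm : MeasurableSet (Icc (-t - 1) (-t) ×ˢ Icc (-ρ * t) (-ρ * t + 1)) := measurableSet_Icc.prod measurableSet_Icc
  rw [withDensity_apply _ hm]
  have hv : volume (Icc (-t - 1) (-t) ×ˢ Icc (-ρ * t) (-ρ * t + 1)) = 1 := by
    rw [Measure.volume_eq_prod, Measure.prod_prod]; simp
  calc _ = ∫⁻ w in (Icc (-t - 1) (-t) ×ˢ Icc (-ρ * t) (-ρ * t + 1)), ENNReal.ofReal ((2 * Real.pi * Real.sqrt (1 - ρ ^ 2))⁻¹ * Real.exp (-2 / (1 - ρ ^ 2)) * Real.exp (-(t + 1) ^ 2 / 2)) := by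
        rw [setLIntegral_const, hv, mul_one]
    _ ≤ _ := by
        refine setLIntegral_mono' hm fun z hz => ?_
        obtain ⟨⟨a1, a2⟩, a3, a4⟩ := hz
        refine ENNReal.ofReal_le_ofReal ?_
        rw [mul_assoc, ← Real.exp_add]
        gcongr
        have e : -(z.1 ^ 2 - 2 * ρ * z.1 * z.2 + z.2 ^ 2) / (2 * (1 - ρ ^ 2)) = -z.1 ^ 2 / 2 + (-(z.2 - ρ * z.1) ^ 2 / 2) / (1 - ρ ^ 2) := by
          field_simp; ring
        rw [e]
        have b1 : z.1 ^ 2 ≤ (t + 1) ^ 2 := by nlinarith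
        have b2 : (z.2 - ρ * z.1) ^ 2 ≤ 4 := by
          have : |ρ * (z.1 + t)| ≤ 1 := by
            rw [abs_mul]
            have : |ρ| ≤ 1 := abs_le.2 ⟨by linarith, by linarith⟩
            have : |z.1 + t| ≤ 1 := abs_le.2 ⟨by linarith, by linarith⟩
            exact mul_le_one₀ ‹_› (abs_nonneg _) ‹_›
          obtain ⟨c1, c2⟩ := abs_le.1 this
          nlinarith
        have : -2 / (1 - ρ ^ 2) ≤ (-(z.2 - ρ * z.1) ^ 2 / 2) / (1 - ρ ^ 2) := by
          gcongr; linarith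
        linarith

lemma aux_s (b θ ρ : ℝ) (hb : 0 < b) (hρ : ρ ∈ Set.Ioo (-1 : ℝ) 1) :
    ∃ s : ℝ, θ + Real.sqrt (θ ^ 2 + b ^ 2) < s ∧ -s * θ + s ^ 2 * (1 + ρ) / 4 < b ^ 2 / 2 := by
  set s₁ := θ + Real.sqrt (θ ^ 2 + b ^ 2) with hs
  have hD := Real.sq_sqrt (show 0 ≤ θ ^ 2 + b ^ 2 by positivity)
  have hlt : |θ| < Real.sqrt (θ ^ 2 + b ^ 2) := by
    rw [← Real.sqrt_sq_eq_abs]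
    exact Real.sqrt_lt_sqrt (by positivity) (by nlinarith)
  have hs0 : 0 < s₁ := by have := neg_abs_le θ; linarith
  have h1 : -s₁ * θ + s₁ ^ 2 * (1 + ρ) / 4 < b ^ 2 / 2 := by
    have : -s₁ * θ + s₁ ^ 2 / 2 = b ^ 2 / 2 := by rw [hs]; nlinarith
    have h3 : 0 < s₁ ^ 2 * (1 - ρ) := mul_pos (by positivity) (by linarith [hρ.2])
    nlinarith
  have hc : Continuous fun s : ℝ => -s * θ + s ^ 2 * (1 + ρ) / 4 := by fun_prop
  have h2 := (hc.tendsto s₁).eventually (gt_mem_nhds h1)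
  have h3 : ∀ᶠ s in nhdsWithin s₁ (Ioi s₁), -s * θ + s ^ 2 * (1 + ρ) / 4 < b ^ 2 / 2 :=
    h2.filter_mono nhdsWithin_le_nhds
  obtain ⟨s, h4, h5⟩ := (h3.and self_mem_nhdsWithin).exists
  exact ⟨s, h5, h4⟩

lemma aux_upper (p b θ ρ s : ℝ) (hp : 0 < p) (hρ : ρ ∈ Set.Ioo (-1 : ℝ) 1)
    (hs0 : 0 < s) (hs : -s * θ + s ^ 2 * (1 + ρ) / 4 < b ^ 2 / 2)
    {Ω : Type*} [MeasurableSpace Ω] (P : Measure Ω) [IsProbabilityMeasure P]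
    (W Z₁ Z₂ : Ω → ℝ) (hW : Measurable W) (hZ : Measurable fun ω => (Z₁ ω, Z₂ ω))
    (hWlaw : Measure.map W P =
      volume.withDensity fun w : ℝ => ENNReal.ofReal
        (if 0 < w then
          (b ^ 2 / 2) ^ p * w ^ (p - 1) * Real.exp (-(b ^ 2 / 2) * w) / Real.Gamma p
        else 0))
    (hZlaw : Measure.map (fun ω => (Z₁ ω, Z₂ ω)) P =
      volume.withDensity fun z : ℝ × ℝ => ENNReal.ofReal
        ((2 * Real.pi * Real.sqrt (1 - ρ ^ 2))⁻¹ *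
          Real.exp (-(z.1 ^ 2 - 2 * ρ * z.1 * z.2 + z.2 ^ 2) / (2 * (1 - ρ ^ 2)))))
    (hindep : ProbabilityTheory.IndepFun W (fun ω => (Z₁ ω, Z₂ ω)) P)
    (X₁ X₂ : Ω → ℝ)
    (hX₁ : ∀ ω, X₁ ω = θ * W ω + Real.sqrt (W ω) * Z₁ ω)
    (hX₂ : ∀ ω, X₂ ω = θ * W ω + Real.sqrt (W ω) * Z₂ ω) :
    ∃ C : ℝ, 0 ≤ C ∧ ∀ x, (P {ω | X₁ ω ≤ x ∧ X₂ ω ≤ x}).toReal ≤ C * Real.exp (s * x) := by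
  set g : ℝ × (ℝ × ℝ) → ENNReal := fun v =>
    ENNReal.ofReal (Real.exp (-s * θ * v.1 + (-s * Real.sqrt v.1 / 2) * (v.2.1 + v.2.2))) with hg
  have hgm : Measurable g := by simp only [hg]; fun_prop
  have hpz : IsProbabilityMeasure (Measure.map (fun ω => (Z₁ ω, Z₂ ω)) P) :=
    Measure.isProbabilityMeasure_map hZ.aemeasurable
  have hpw : IsProbabilityMeasure (Measure.map W P) :=
    Measure.isProbabilityMeasure_map hW.aemeasurable
  have hfin : ∫⁻ ω, g (W ω, (Z₁ ω, Z₂ ω)) ∂P < ⊤ := by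
    rw [← lintegral_map (f := g) (g := fun ω => (W ω, (Z₁ ω, Z₂ ω))) hgm (hW.prodMk hZ)]
    rw [(ProbabilityTheory.indepFun_iff_map_prod_eq_prod_map_map hW.aemeasurable hZ.aemeasurable).1 hindep]
    rw [lintegral_prod _ hgm.aemeasurable]
    have inner : ∀ w : ℝ, ∫⁻ z, g (w, z) ∂(Measure.map (fun ω => (Z₁ ω, Z₂ ω)) P)
        = ENNReal.ofReal (Real.exp (-s * θ * w)) *
          ENNReal.ofReal (Real.exp ((-s * Real.sqrt w / 2) ^ 2 * (1 + ρ))) := by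
      intro w
      rw [← aux_mgf ρ _ hρ _ hZlaw, ← lintegral_const_mul _ (by fun_prop)]
      refine lintegral_congr fun z => ?_
      rw [← ENNReal.ofReal_mul (by positivity), ← Real.exp_add]
    simp_rw [inner]
    have hlt := aux_gamma p b _ hp hs
    refine lt_of_le_of_lt (le_of_eq ?_) hlt
    rw [hWlaw]
    refine lintegral_congr_ae ?_
    have hpos : ∀ᵐ w ∂(volume.withDensity fun w : ℝ => ENNReal.ofReal
        (if 0 < w then
          (b ^ 2 / 2) ^ p * w ^ (p - 1) * Real.exp (-(b ^ 2 / 2) * w) / Real.Gamma p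
        else 0)), 0 < w := by
      rw [ae_withDensity_iff (by
        refine Measurable.ennreal_ofReal (Measurable.ite measurableSet_Ioi (by fun_prop) (by fun_prop)))]
      refine Eventually.of_forall fun w hw => ?_
      by_contra h
      simp [h] at hw
    filter_upwards [hpos] with w hw
    rw [← ENNReal.ofReal_mul (by positivity), ← Real.exp_add]
    congr 2
    have := Real.sq_sqrt hw.le
    linear_combination (s ^ 2 / 4 * (1 + ρ)) * this
  refine ⟨(∫⁻ ω, g (W ω, (Z₁ ω, Z₂ ω)) ∂P).toReal, ENNReal.toReal_nonneg, fun x => ?_⟩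
  have hmk := mul_meas_ge_le_lintegral (μ := P) (f := fun ω => g (W ω, (Z₁ ω, Z₂ ω)))
    (hgm.comp (hW.prodMk hZ)) (ENNReal.ofReal (Real.exp (-s * x)))
  have hsub : {ω | X₁ ω ≤ x ∧ X₂ ω ≤ x} ⊆
      {ω | ENNReal.ofReal (Real.exp (-s * x)) ≤ g (W ω, (Z₁ ω, Z₂ ω))} := by
    rintro ω ⟨h1, h2⟩
    refine ENNReal.ofReal_le_ofReal (Real.exp_le_exp.2 ?_)
    rw [hX₁] at h1
    rw [hX₂] at h2
    simp only
    nlinarith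
  have h3 : ENNReal.ofReal (Real.exp (-s * x)) * P {ω | X₁ ω ≤ x ∧ X₂ ω ≤ x} ≤
      ∫⁻ ω, g (W ω, (Z₁ ω, Z₂ ω)) ∂P :=
    le_trans (mul_le_mul_right (measure_mono hsub) _) hmk
  have h4 := ENNReal.toReal_mono hfin.ne h3
  rw [ENNReal.toReal_mul, ENNReal.toReal_ofReal (by positivity)] at h4
  have h5 : Real.exp (-s * x) * Real.exp (s * x) = 1 := by
    rw [← Real.exp_add]; simp
  calc (P {ω | X₁ ω ≤ x ∧ X₂ ω ≤ x}).toReal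
      = (Real.exp (-s * x) * (P {ω | X₁ ω ≤ x ∧ X₂ ω ≤ x}).toReal) * Real.exp (s * x) := by
        linear_combination (-(P {ω | X₁ ω ≤ x ∧ X₂ ω ≤ x}).toReal) * h5
    _ ≤ _ := by gcongr

lemma aux_lower (p b θ ρ δ κ : ℝ) (hp : 0 < p) (hb : 0 < b) (hρ : ρ ∈ Set.Ioo (-1 : ℝ) 1)
    (hδ : 0 < δ) (hκ : 0 < κ) (hθκ : 0 ≤ 1 + θ * κ)
    {Ω : Type*} [MeasurableSpace Ω] (P : Measure Ω) [IsProbabilityMeasure P]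
    (W Z₁ Z₂ : Ω → ℝ) (hW : Measurable W) (hZ : Measurable fun ω => (Z₁ ω, Z₂ ω))
    (hWlaw : Measure.map W P =
      volume.withDensity fun w : ℝ => ENNReal.ofReal
        (if 0 < w then
          (b ^ 2 / 2) ^ p * w ^ (p - 1) * Real.exp (-(b ^ 2 / 2) * w) / Real.Gamma p
        else 0))
    (hZlaw : Measure.map (fun ω => (Z₁ ω, Z₂ ω)) P =
      volume.withDensity fun z : ℝ × ℝ => ENNReal.ofReal
        ((2 * Real.pi * Real.sqrt (1 - ρ ^ 2))⁻¹ *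
          Real.exp (-(z.1 ^ 2 - 2 * ρ * z.1 * z.2 + z.2 ^ 2) / (2 * (1 - ρ ^ 2)))))
    (hindep : ProbabilityTheory.IndepFun W (fun ω => (Z₁ ω, Z₂ ω)) P)
    (X₁ : Ω → ℝ)
    (hX₁ : ∀ ω, X₁ ω = θ * W ω + Real.sqrt (W ω) * Z₁ ω) :
    ∃ c : ℝ, 0 < c ∧ ∀ y, 1 ≤ y → 1 ≤ κ * y →
      c * Real.exp (-(b ^ 2 / 2 + δ) * (κ * y) +
        -((1 + θ * κ) / Real.sqrt κ * Real.sqrt y + |θ| / Real.sqrt κ + 1) ^ 2 / 2)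
      ≤ (P {ω | X₁ ω ≤ -y}).toReal := by
  obtain ⟨c₁, hc₁, H₁⟩ := aux_W p b δ hp hb hδ
  obtain ⟨c₂, hc₂, H₂⟩ := aux_Z ρ hρ
  refine ⟨c₁ * c₂, by positivity, fun y hy hky => ?_⟩
  set t := (1 + θ * κ) / Real.sqrt κ * Real.sqrt y + |θ| / Real.sqrt κ with ht
  have ht0 : 0 ≤ t := by positivity
  have K₁ := H₁ _ hky
  have K₂ := H₂ t ht0
  set R := (Icc (-t - 1) (-t) ×ˢ Icc (-ρ * t) (-ρ * t + 1)) with hR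
  have hm : MeasurableSet R := measurableSet_Icc.prod measurableSet_Icc
  rw [← hWlaw, Measure.map_apply hW measurableSet_Icc] at K₁
  rw [← hZlaw, Measure.map_apply hZ hm] at K₂
  have hi := hindep.measure_inter_preimage_eq_mul _ _ (measurableSet_Icc (a := κ * y) (b := κ * y + 1)) hm
  have hsub : W ⁻¹' Icc (κ * y) (κ * y + 1) ∩ (fun ω => (Z₁ ω, Z₂ ω)) ⁻¹' R ⊆ {ω | X₁ ω ≤ -y} := by
    rintro ω ⟨⟨w1, w2⟩, ⟨z1, z2⟩, -⟩
    simp only at z1 z2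
    show X₁ ω ≤ -y
    rw [hX₁]
    have hsk := Real.sqrt_pos.2 hκ
    have hsy : 1 ≤ Real.sqrt y := by rw [Real.one_le_sqrt]; exact hy
    have hyy : Real.sqrt y * Real.sqrt y = y := Real.mul_self_sqrt (by linarith)
    have e1 : Real.sqrt κ * Real.sqrt y ≤ Real.sqrt (W ω) := by
      rw [← Real.sqrt_mul hκ.le]; exact Real.sqrt_le_sqrt w1
    have e2 : Real.sqrt κ * Real.sqrt y * t = (1 + θ * κ) * y + |θ| * Real.sqrt y := by
      rw [ht]; field_simp; linear_combination (1 + θ * κ) * hyy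
    have e3 : Real.sqrt κ * Real.sqrt y * t ≤ Real.sqrt (W ω) * t := by gcongr
    have e4 : Real.sqrt (W ω) * Z₁ ω ≤ Real.sqrt (W ω) * (-t) := by gcongr
    have e5 : θ * (W ω - κ * y) ≤ |θ| := by
      have := le_abs_self θ
      have := abs_nonneg θ
      nlinarith
    have e6 : |θ| ≤ |θ| * Real.sqrt y := le_mul_of_one_le_right (abs_nonneg _) hsy
    nlinarith
  have h1 : ENNReal.ofReal (c₁ * Real.exp (-(b ^ 2 / 2 + δ) * (κ * y))) *
      ENNReal.ofReal (c₂ * Real.exp (-(t + 1) ^ 2 / 2)) ≤ P {ω | X₁ ω ≤ -y} := by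
    refine le_trans (mul_le_mul' K₁ K₂) ?_
    rw [← hi]
    exact measure_mono hsub
  have h2 := ENNReal.toReal_mono (measure_ne_top P _) h1
  rw [ENNReal.toReal_mul, ENNReal.toReal_ofReal (by positivity), ENNReal.toReal_ofReal (by positivity)] at h2
  refine le_trans (le_of_eq ?_) h2
  rw [Real.exp_add]; ring


/-- Asymptotic lower-tail independence of the equi-skew GH model GH(0,R,(θ,θ),p,0,b)
(including the bivariate equi-skew Variance Gamma for p = 1/2, b = √(2/ν)):
λ_L(u) = P(X₁ ≤ F⁻¹(u), X₂ ≤ F⁻¹(u))/u → 0 as u → 0⁺, where F is the common continuous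
strictly increasing marginal distribution function and F⁻¹ its quantile function. -/
theorem stmt_19 (p b θ ρ : ℝ) (hp : 0 < p) (hb : 0 < b) (hρ : ρ ∈ Set.Ioo (-1 : ℝ) 1)
    {Ω : Type*} [MeasurableSpace Ω] (P : Measure Ω) [IsProbabilityMeasure P]
    (W Z₁ Z₂ : Ω → ℝ) (hW : Measurable W) (hZ : Measurable fun ω => (Z₁ ω, Z₂ ω))
    (hWlaw : Measure.map W P =
      volume.withDensity fun w : ℝ => ENNReal.ofReal
        (if 0 < w then
          (b ^ 2 / 2) ^ p * w ^ (p - 1) * Real.exp (-(b ^ 2 / 2) * w) / Real.Gamma p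
        else 0))
    (hZlaw : Measure.map (fun ω => (Z₁ ω, Z₂ ω)) P =
      volume.withDensity fun z : ℝ × ℝ => ENNReal.ofReal
        ((2 * Real.pi * Real.sqrt (1 - ρ ^ 2))⁻¹ *
          Real.exp (-(z.1 ^ 2 - 2 * ρ * z.1 * z.2 + z.2 ^ 2) / (2 * (1 - ρ ^ 2)))))
    (hindep : ProbabilityTheory.IndepFun W (fun ω => (Z₁ ω, Z₂ ω)) P)
    (X₁ X₂ : Ω → ℝ)
    (hX₁ : ∀ ω, X₁ ω = θ * W ω + Real.sqrt (W ω) * Z₁ ω)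
    (hX₂ : ∀ ω, X₂ ω = θ * W ω + Real.sqrt (W ω) * Z₂ ω)
    (F Finv : ℝ → ℝ)
    (hF : ∀ x, F x = (P {ω | X₁ ω ≤ x}).toReal)
    (hFmarg : ∀ x, F x = (P {ω | X₂ ω ≤ x}).toReal)
    (hFinv : ∀ u ∈ Ioo (0 : ℝ) 1, F (Finv u) = u) :
    Tendsto
      (fun u => (P {ω | X₁ ω ≤ Finv u ∧ X₂ ω ≤ Finv u}).toReal / u)
      (nhdsWithin 0 (Ioi 0)) (nhds 0) := by
  obtain ⟨s, hs1, hs2⟩ := aux_s b θ ρ hb hρ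
  set D := Real.sqrt (θ ^ 2 + b ^ 2) with hD
  have hDsq : D ^ 2 = θ ^ 2 + b ^ 2 := Real.sq_sqrt (by positivity)
  have hlt : |θ| < D := by
    rw [← Real.sqrt_sq_eq_abs]
    exact Real.sqrt_lt_sqrt (by positivity) (by nlinarith)
  have hD0 : 0 < D := lt_of_le_of_lt (abs_nonneg _) hlt
  have hθD : 0 < θ + D := by have := neg_abs_le θ; linarith
  have hs0 : 0 < s := by linarith
  obtain ⟨C, hC, HC⟩ := aux_upper p b θ ρ s hp hρ hs0 hs2 P W Z₁ Z₂ hW hZ hWlaw hZlaw hindep X₁ X₂ hX₁ hX₂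
  set ε := (s - (θ + D)) / 2 with hε
  have hε0 : 0 < ε := by linarith
  have hκ1 : 1 + θ * D⁻¹ = (θ + D) / D := by field_simp; ring
  obtain ⟨c, hc, Hc⟩ := aux_lower p b θ ρ (ε * D) D⁻¹ hp hb hρ (by positivity) (by positivity)
    (by rw [hκ1]; positivity) P W Z₁ Z₂ hW hZ hWlaw hZlaw hindep X₁ hX₁
  set A := (1 + θ * D⁻¹) / Real.sqrt D⁻¹ with hA
  set B := |θ| / Real.sqrt D⁻¹ with hB
  have hA2 : A ^ 2 = (θ + D) ^ 2 / D := by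
    rw [hA, div_pow, Real.sq_sqrt (by positivity), hκ1]
    field_simp
  have hFpos : ∀ y, max 1 D ≤ y → 0 < F (-y) := by
    intro y hy
    rw [hF]
    have hy1 := le_trans (le_max_left _ _) hy
    have hy2 := le_trans (le_max_right _ _) hy
    refine lt_of_lt_of_le ?_ (Hc y hy1 ?_)
    · positivity
    · rw [inv_mul_eq_div, le_div_iff₀ hD0]; linarith
  have hmono : Monotone F := by
    intro x x' hx
    rw [hF, hF]
    exact ENNReal.toReal_mono (measure_ne_top P _) (measure_mono fun ω hω => le_trans hω hx)
  -- quantile tends to minus infinity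
  have hbot : Tendsto Finv (nhdsWithin 0 (Ioi 0)) atBot := by
    rw [tendsto_atBot]
    intro x
    have hq := hFpos (max (max 1 D) (-x)) (le_max_left _ _)
    have hx : -(max (max 1 D) (-x)) ≤ x := by have := le_max_right (max 1 D) (-x); linarith
    have hm : Ioo (0 : ℝ) (min 1 (F (-(max (max 1 D) (-x))))) ∈ nhdsWithin (0 : ℝ) (Ioi 0) :=
      Ioo_mem_nhdsGT (lt_min one_pos hq)
    filter_upwards [hm] with u hu
    obtain ⟨hu1, hu2⟩ := hu
    by_contra hcon
    have h1 := hFinv u ⟨hu1, lt_of_lt_of_le hu2 (min_le_left _ _)⟩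
    have h2 := hmono (le_trans hx (not_le.1 hcon).le)
    have h3 := lt_of_lt_of_le hu2 (min_le_right _ _)
    linarith
  have hexp : Tendsto (fun y : ℝ => Real.sqrt y * (-ε * Real.sqrt y + A * (B + 1)) + (B + 1) ^ 2 / 2) atTop atBot := by
    have hsq : Tendsto Real.sqrt atTop atTop := Real.tendsto_sqrt_atTop
    have h1 : Tendsto (fun y : ℝ => -ε * Real.sqrt y) atTop atBot :=
      hsq.const_mul_atTop_of_neg (by linarith)
    exact tendsto_atBot_add_const_right _ _ (hsq.atTop_mul_atBot₀ (tendsto_atBot_add_const_right _ _ h1))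
  have hG : Tendsto (fun y : ℝ => C / c * Real.exp (Real.sqrt y * (-ε * Real.sqrt y + A * (B + 1)) + (B + 1) ^ 2 / 2)) atTop (nhds 0) := by
    simpa using (Real.tendsto_exp_atBot.comp hexp).const_mul (C / c)
  have hmain : Tendsto (fun x => (P {ω | X₁ ω ≤ x ∧ X₂ ω ≤ x}).toReal / F x) atBot (nhds 0) := by
    refine squeeze_zero' (Eventually.of_forall fun x => ?_) ?_ (hG.comp tendsto_neg_atBot_atTop)
    · rw [hF]; positivity
    · filter_upwards [eventually_le_atBot (-(max 1 D))] with x hx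
      have hy : max 1 D ≤ -x := by linarith
      have hpos := hFpos _ hy
      rw [neg_neg] at hpos
      have hy1 := le_trans (le_max_left _ _) hy
      have hy2 := le_trans (le_max_right _ _) hy
      have hl := Hc (-x) hy1 (by rw [inv_mul_eq_div, le_div_iff₀ hD0]; linarith)
      rw [neg_neg, ← hF] at hl
      rw [div_le_iff₀ hpos]
      refine (HC x).trans ?_
      simp only [Function.comp]
      have hyy : Real.sqrt (-x) ^ 2 = -x := Real.sq_sqrt (by linarith)
      set r := Real.sqrt (-x) with hr
      refine le_trans (le_of_eq ?_) (mul_le_mul_of_nonneg_left hl (by positivity))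
      have hid : s * x = (r * (-ε * r + A * (B + 1)) + (B + 1) ^ 2 / 2) +
          (-(b ^ 2 / 2 + ε * D) * (D⁻¹ * -x) + -(A * r + B + 1) ^ 2 / 2) := by
        have hx' : x = -r ^ 2 := by linarith
        have e1 : (b ^ 2 / 2 + ε * D) * D⁻¹ + A ^ 2 / 2 + ε = s := by
          rw [hA2, show b ^ 2 = D ^ 2 - θ ^ 2 by linarith, hε]
          field_simp
          ring
        rw [← e1, hx']
        ring
      rw [hid, Real.exp_add]
      field_simp
  refine (hmain.comp hbot).congr' ?_
  have hm : Ioo (0 : ℝ) 1 ∈ nhdsWithin (0 : ℝ) (Ioi 0) := Ioo_mem_nhdsGT one_pos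
  filter_upwards [hm] with u hu
  simp only [Function.comp]
  rw [hFinv u hu]
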